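/- arXiv:2603.13491 — 2 statements merged into one kernel-verified Lean document; each statement's English description precedes it below -/
import Mathlib

section
/- Let Z ⊆ ℝ^d be a nonempty closed convex set, let h : ℝ^d → ℝ be differentiable and convex with Bregman divergence ω(z_b, z_a) = h(z_b) − h(z_a) − ⟨∇h(z_a), z_b − z_a⟩, let φ : ℝ^d → ℝ be differentiable and convex, and let z_a ∈ Z. Suppose z_c ∈ Z minimizes z' ↦ φ(z') + ω(z', z_a) over Z. Then for every z_b ∈ Z, φ(z_b) + ω(z_b, z_a) ≥ φ(z_c) + ω(z_c, z_a) + ω(z_b, z_c). -/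
open RealInnerProductSpace

/-! A minimizer `zc` of `ψ + h`, with `ψ` convex and `h` differentiable at `zc`, satisfies
`ψ zc ≤ ψ zb + h' zc (zb - zc)`. To get this without differentiating `ψ`, minimize the
differentiable function `(z, r) ↦ r + h z` over the epigraph of `ψ`, which is convex, and use
Fermat's condition there. Up to a constant, `φ + ω(·, za)` is `ψ + h` with `ψ = φ - h' za`, and the
inequality becomes the claim. -/

section NormedSpace

variable {E : Type*} [NormedAddCommGroup E] [NormedSpace ℝ E] {s : Set E}

theorem apply_sub_nonneg_of_isMinOn_of_convex {f : E → ℝ} {f' : E →L[ℝ] ℝ} {x y : E}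
    (hs : Convex ℝ s) (hf : HasFDerivWithinAt f f' s x) (hmin : IsMinOn f s x)
    (hx : x ∈ s) (hy : y ∈ s) : 0 ≤ f' (y - x) :=
  hmin.localize.hasFDerivWithinAt_nonneg hf
    (sub_mem_posTangentConeAt_of_segment_subset (hs.segment_subset hx hy))

theorem le_add_apply_sub_of_isMinOn_add {ψ h : E → ℝ} {h' : E →L[ℝ] ℝ} {x y : E}
    (hψ : ConvexOn ℝ s ψ) (hh : HasFDerivWithinAt h h' s x)
    (hmin : IsMinOn (fun z ↦ ψ z + h z) s x) (hx : x ∈ s) (hy : y ∈ s) :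
    ψ x ≤ ψ y + h' (y - x) := by
  let epi : Set (E × ℝ) := {p | p.1 ∈ s ∧ ψ p.1 ≤ p.2}
  have hmin_epi : IsMinOn (fun p : E × ℝ ↦ p.2 + h p.1) epi (x, ψ x) := fun p hp ↦
    (hmin hp.1).trans (add_le_add_left hp.2 (h p.1))
  have hderiv : HasFDerivWithinAt (fun p : E × ℝ ↦ p.2 + h p.1)
      (.snd ℝ E ℝ + h' ∘L .fst ℝ E ℝ) epi (x, ψ x) :=
    hasFDerivWithinAt_snd.add (hh.comp (x, ψ x) hasFDerivWithinAt_fst fun _ hp ↦ hp.1)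
  have hnonneg : 0 ≤ (ψ y - ψ x) + h' (y - x) :=
    apply_sub_nonneg_of_isMinOn_of_convex (y := (y, ψ y)) hψ.convex_epigraph hderiv hmin_epi
      ⟨hx, le_rfl⟩ ⟨hy, le_rfl⟩
  linarith

/-- The Bregman divergence `ω(x, y)` of `h`. The derivative is passed as a separate map `h'` so that
`h` need only be differentiable, possibly relative to a set, at the points of interest. -/
def bregmanDiv (h : E → ℝ) (h' : E → E →L[ℝ] ℝ) (x y : E) : ℝ :=
  h x - h y - h' y (x - y)

theorem tseng_lemma_general {h φ : E → ℝ} {h' : E → E →L[ℝ] ℝ} {za zb zc : E}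
    (hφ : ConvexOn ℝ s φ) (hh : ∀ z ∈ ({za, zc} : Set E), HasFDerivWithinAt h (h' z) s z)
    (hmin : IsMinOn (fun z ↦ φ z + bregmanDiv h h' z za) s zc) (hzc : zc ∈ s) (hzb : zb ∈ s) :
    φ zc + bregmanDiv h h' zc za + bregmanDiv h h' zb zc ≤ φ zb + bregmanDiv h h' zb za := by
  have hψ : ConvexOn ℝ s (fun z ↦ φ z - h' za z) :=
    hφ.sub ((h' za).toLinearMap.concaveOn hφ.1)
  have hψmin : IsMinOn (fun z ↦ (φ z - h' za z) + h z) s zc := by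
    refine isMinOn_iff.2 fun z hz ↦ ?_
    have hle := isMinOn_iff.1 hmin z hz
    simp only [bregmanDiv, map_sub] at hle
    linarith
  have hopt : φ zc - h' za zc ≤ φ zb - h' za zb + h' zc (zb - zc) :=
    le_add_apply_sub_of_isMinOn_add hψ (hh zc (by simp)) hψmin hzc hzb
  simp only [bregmanDiv, map_sub] at hopt ⊢
  linarith

end NormedSpace

/-- Tseng's lemma: if `z_c` minimizes `z' ↦ φ(z') + ω(z', z_a)` over a nonempty closed
convex set `Z`, where `ω` is the Bregman divergence of a differentiable convex `h`
and `φ` is differentiable convex, then for every `z_b ∈ Z`,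
`φ(z_b) + ω(z_b, z_a) ≥ φ(z_c) + ω(z_c, z_a) + ω(z_b, z_c)`. -/
theorem tseng_lemma {d : ℕ} (Z : Set (EuclideanSpace ℝ (Fin d)))
    (hZne : Z.Nonempty) (hZclosed : IsClosed Z) (hZconv : Convex ℝ Z)
    (h φ : EuclideanSpace ℝ (Fin d) → ℝ)
    (hhdiff : Differentiable ℝ h) (hhconv : ConvexOn ℝ Set.univ h)
    (hφdiff : Differentiable ℝ φ) (hφconv : ConvexOn ℝ Set.univ φ)
    (ω : EuclideanSpace ℝ (Fin d) → EuclideanSpace ℝ (Fin d) → ℝ)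
    (hω : ∀ zb za, ω zb za = h zb - h za - ⟪gradient h za, zb - za⟫)
    (za zc : EuclideanSpace ℝ (Fin d)) (hza : za ∈ Z) (hzc : zc ∈ Z)
    (hmin : ∀ z' ∈ Z, φ zc + ω zc za ≤ φ z' + ω z' za) :
    ∀ zb ∈ Z, φ zb + ω zb za ≥ φ zc + ω zc za + ω zb zc := by
  obtain rfl : ω = bregmanDiv h fun z ↦ InnerProductSpace.toDual ℝ _ (gradient h z) :=
    funext₂ hω
  exact fun zb hzb ↦ tseng_lemma_general (hφconv.subset (Set.subset_univ Z) hZconv)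
    (fun z _ ↦ (hhdiff z).hasGradientAt.hasFDerivAt.hasFDerivWithinAt) hmin hzc hzb
end

section
/- Let p ≥ 2 be real, s ≥ 1 an integer with s + 1 ≥ p, L > 0 and ν real. Let F : ℝ^d → ℝ^d, let a, b ∈ ℝ^d and let g ∈ ℝ^d satisfy: (i) ‖g − F(a)‖_{p*} ≤ (L/s!)·‖a − b‖_p^s, and (ii) g + ∇_u((2^ν L/s!)·‖u‖_p^{s+1})|_{u = a − b} = 0 (the first-order optimality condition of the regularized step). Then ‖g‖_{p*} = 2^ν·((s+1)L/s!)·‖a − b‖_p^s and consequently ‖F(a)‖_{p*} ≤ (((s+1)·2^ν + 1)·L/s!)·‖a − b‖_p^s. -/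
open RealInnerProductSpace

/-- The ℓ_p norm on ℝ^d : `‖z‖_p = (Σ_i |z_i|^p)^(1/p)`. -/
noncomputable def lpnorm {d : ℕ} (p : ℝ) (z : EuclideanSpace ℝ (Fin d)) : ℝ :=
  (∑ i, |z i| ^ p) ^ (1 / p)

/-!
For `1 < p` and `1 < t` the gradient of `‖·‖_p ^ t` at `u` is `t ‖u‖_p ^ (t - p) • J u`, where
`(J u)_i = |u_i| ^ (p - 2) u_i`. Away from `0` this is the chain rule; at `0` equivalence of norms
gives `‖u‖_p ^ t = O(‖u‖ ^ t) = o(‖u‖)`. Since `(p - 1) p* = p`, one has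
`‖J u‖_{p*} = ‖u‖_p ^ (p - 1)`, so the gradient has dual norm `t ‖u‖_p ^ (t - 1)`. For `t = s + 1`,
optimality turns this into the value of `‖g‖_{p*}`, and the bound on `F a` is the triangle
inequality.
-/

section Gradient

variable {E : Type*} [NormedAddCommGroup E] [InnerProductSpace ℝ E] [CompleteSpace E]

lemma hasGradientAt_comp_of_hasDerivAt {φ : ℝ → ℝ} {φ' : ℝ} {f : E → ℝ} {f' u : E}
    (hφ : HasDerivAt φ φ' (f u)) (hf : HasGradientAt f f' u) :
    HasGradientAt (fun v => φ (f v)) (φ' • f') u := by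
  rw [hasGradientAt_iff_hasFDerivAt, map_smul]
  exact hφ.comp_hasFDerivAt u hf.hasFDerivAt

end Gradient

section DualityMap

variable {ι : Type*}

/-- The duality map of `ℓ_p`, for `1 < p`, normalized so that
`⟪lpDualityMap p u, u⟫ = ∑ i, |u i| ^ p`. Up to a nonnegative scalar it is the gradient of every
power `t > 1` of the `ℓ_p` norm. The factor `u i`, in place of its sign, makes it vanish at `u = 0`
whatever the value of `0 ^ (p - 2)`. -/
noncomputable def lpDualityMap (p : ℝ) (u : EuclideanSpace ℝ ι) : EuclideanSpace ℝ ι :=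
  WithLp.toLp 2 fun i => |u i| ^ (p - 2) * u i

lemma lpDualityMap_zero (p : ℝ) : lpDualityMap p (0 : EuclideanSpace ℝ ι) = 0 := by
  ext i
  simp [lpDualityMap]

lemma abs_lpDualityMap_apply {p : ℝ} (hp : p ≠ 1) (u : EuclideanSpace ℝ ι) (i : ι) :
    |lpDualityMap p u i| = |u i| ^ (p - 1) := by
  have hp' : p - 2 + 1 ≠ 0 := by contrapose! hp; linarith
  calc |lpDualityMap p u i| = |u i| ^ (p - 2) * |u i| := by
        simp only [lpDualityMap, abs_mul, Real.abs_rpow_of_nonneg (abs_nonneg _), abs_abs]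
    _ = |u i| ^ (p - 1) := by
        rw [← Real.rpow_add_one' (abs_nonneg _) hp']
        ring_nf

lemma hasGradientAt_sum_abs_rpow [Fintype ι] {p : ℝ} (hp : 1 < p) (u : EuclideanSpace ℝ ι) :
    HasGradientAt (fun v : EuclideanSpace ℝ ι => ∑ i, |v i| ^ p) (p • lpDualityMap p u) u := by
  have hcoord (i : ι) : HasFDerivAt (fun v : EuclideanSpace ℝ ι => |v i| ^ p)
      ((p * |u i| ^ (p - 2) * u i) • (EuclideanSpace.proj i : EuclideanSpace ℝ ι →L[ℝ] ℝ)) u :=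
    (hasDerivAt_abs_rpow (u i) hp).comp_hasFDerivAt (f := fun v : EuclideanSpace ℝ ι => v i) u
      (EuclideanSpace.proj i : EuclideanSpace ℝ ι →L[ℝ] ℝ).hasFDerivAt
  rw [hasGradientAt_iff_hasFDerivAt]
  refine (HasFDerivAt.fun_sum fun i _ => hcoord i).congr_fderiv ?_
  ext v
  simp [lpDualityMap, PiLp.inner_apply, Finset.mul_sum, mul_assoc, mul_left_comm, mul_comm]

end DualityMap

section LpNorm

open Asymptotics Filter Topology

variable {d : ℕ} {p q t : ℝ}

lemma lpnorm_nonneg (p : ℝ) (z : EuclideanSpace ℝ (Fin d)) : 0 ≤ lpnorm p z := by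
  unfold lpnorm
  positivity

lemma lpnorm_zero (hp : p ≠ 0) : lpnorm p (0 : EuclideanSpace ℝ (Fin d)) = 0 := by
  simp [lpnorm, hp]

lemma lpnorm_rpow (p t : ℝ) (z : EuclideanSpace ℝ (Fin d)) :
    lpnorm p z ^ t = (∑ i, |z i| ^ p) ^ (t / p) := by
  rw [lpnorm, ← Real.rpow_mul (by positivity), one_div_mul_eq_div]

lemma sum_abs_rpow_pos {ι : Type*} [Fintype ι] {z : EuclideanSpace ℝ ι} (p : ℝ) (hz : z ≠ 0) :
    0 < ∑ i, |z i| ^ p := by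
  obtain ⟨i, hi⟩ : ∃ i, z i ≠ 0 := by
    contrapose! hz
    ext i
    exact hz i
  exact Finset.sum_pos' (fun j _ => by positivity) ⟨i, Finset.mem_univ i, by positivity⟩

lemma lpnorm_pos {z : EuclideanSpace ℝ (Fin d)} (p : ℝ) (hz : z ≠ 0) : 0 < lpnorm p z :=
  Real.rpow_pos_of_pos (sum_abs_rpow_pos p hz) _

lemma lpnorm_neg (p : ℝ) (z : EuclideanSpace ℝ (Fin d)) : lpnorm p (-z) = lpnorm p z := by
  simp [lpnorm]

lemma lpnorm_smul (hp : p ≠ 0) (c : ℝ) (z : EuclideanSpace ℝ (Fin d)) :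
    lpnorm p (c • z) = |c| * lpnorm p z := by
  simp only [lpnorm, PiLp.smul_apply, smul_eq_mul, abs_mul,
    Real.mul_rpow (abs_nonneg _) (abs_nonneg _), ← Finset.mul_sum]
  rw [Real.mul_rpow (by positivity) (by positivity), ← Real.rpow_mul (abs_nonneg c),
    mul_one_div_cancel hp, Real.rpow_one]

lemma lpnorm_add_le (hp : 1 ≤ p) (x y : EuclideanSpace ℝ (Fin d)) :
    lpnorm p (x + y) ≤ lpnorm p x + lpnorm p y :=
  Real.Lp_add_le Finset.univ (fun i => x i) (fun i => y i) hp

lemma lpnorm_sub_le (hp : 1 ≤ p) (x y : EuclideanSpace ℝ (Fin d)) :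
    lpnorm p (x - y) ≤ lpnorm p x + lpnorm p y := by
  simpa only [sub_eq_add_neg, lpnorm_neg] using lpnorm_add_le hp x (-y)

lemma lpnorm_le_card_rpow_mul_norm (hp : 0 < p) (z : EuclideanSpace ℝ (Fin d)) :
    lpnorm p z ≤ (d : ℝ) ^ (1 / p) * ‖z‖ := by
  have hsum : ∑ i, |z i| ^ p ≤ d * ‖z‖ ^ p := by
    calc ∑ i, |z i| ^ p ≤ ∑ _i : Fin d, ‖z‖ ^ p :=
          Finset.sum_le_sum fun i _ =>
            Real.rpow_le_rpow (abs_nonneg _) (PiLp.norm_apply_le z i) hp.le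
      _ = d * ‖z‖ ^ p := by simp
  calc lpnorm p z ≤ (d * ‖z‖ ^ p) ^ (1 / p) :=
        Real.rpow_le_rpow (by positivity) hsum (by positivity)
    _ = (d : ℝ) ^ (1 / p) * ‖z‖ := by
        rw [Real.mul_rpow (by positivity) (by positivity), ← Real.rpow_mul (norm_nonneg z),
          mul_one_div_cancel hp.ne', Real.rpow_one]

lemma lpnorm_lpDualityMap (hpq : p.HolderConjugate q) (u : EuclideanSpace ℝ (Fin d)) :
    lpnorm q (lpDualityMap p u) = lpnorm p u ^ (p - 1) := by
  have hcoord (i : Fin d) : |lpDualityMap p u i| ^ q = |u i| ^ p := by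
    rw [abs_lpDualityMap_apply hpq.lt.ne', ← Real.rpow_mul (abs_nonneg _), hpq.sub_one_mul_conj]
  have hexp : 1 / q = (p - 1) / p := by
    rw [← hpq.div_conj_eq_sub_one]
    field_simp [hpq.ne_zero]
  rw [lpnorm_rpow, lpnorm, Finset.sum_congr rfl fun i _ => hcoord i, hexp]

lemma hasGradientAt_lpnorm_rpow_of_ne_zero (hp : 1 < p) {u : EuclideanSpace ℝ (Fin d)}
    (hu : u ≠ 0) :
    HasGradientAt (fun v : EuclideanSpace ℝ (Fin d) => lpnorm p v ^ t)
      ((t * lpnorm p u ^ (t - p)) • lpDualityMap p u) u := by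
  have hp0 : p ≠ 0 := by linarith
  have hpow := hasGradientAt_comp_of_hasDerivAt
    (f := fun v : EuclideanSpace ℝ (Fin d) => ∑ i, |v i| ^ p)
    (Real.hasDerivAt_rpow_const (p := t / p) (Or.inl (sum_abs_rpow_pos p hu).ne'))
    (hasGradientAt_sum_abs_rpow hp u)
  simp only [lpnorm_rpow]
  convert hpow using 1
  rw [smul_smul, sub_div, div_self hp0]
  congr 1
  field_simp

lemma hasGradientAt_lpnorm_rpow_zero (hp : 0 < p) (ht : 1 < t) :
    HasGradientAt (fun v : EuclideanSpace ℝ (Fin d) => lpnorm p v ^ t) 0 0 := by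
  have hbigO : (fun v : EuclideanSpace ℝ (Fin d) => lpnorm p v) =O[𝓝 0] fun v => ‖v‖ :=
    .of_bound ((d : ℝ) ^ (1 / p)) <| .of_forall fun v => by
      simpa [abs_of_nonneg (lpnorm_nonneg p v)] using lpnorm_le_card_rpow_mul_norm hp v
  have hlittleO :
      (fun v : EuclideanSpace ℝ (Fin d) => ‖v‖ ^ t) =o[𝓝 0] fun v => v := by
    simpa [show t ≠ 0 by linarith] using
      (hasFDerivAt_norm_rpow (0 : EuclideanSpace ℝ (Fin d)) ht).isLittleO
  rw [hasGradientAt_iff_isLittleO]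
  simpa [lpnorm_zero hp.ne', show t ≠ 0 by linarith] using
    (hbigO.rpow (by linarith) (.of_forall fun v => norm_nonneg v)).trans_isLittleO hlittleO

lemma hasGradientAt_lpnorm_rpow (hp : 1 < p) (ht : 1 < t) (u : EuclideanSpace ℝ (Fin d)) :
    HasGradientAt (fun v : EuclideanSpace ℝ (Fin d) => lpnorm p v ^ t)
      ((t * lpnorm p u ^ (t - p)) • lpDualityMap p u) u := by
  rcases eq_or_ne u 0 with rfl | hu
  · rw [lpDualityMap_zero, smul_zero]
    exact hasGradientAt_lpnorm_rpow_zero (by linarith) ht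
  · exact hasGradientAt_lpnorm_rpow_of_ne_zero hp hu

lemma lpnorm_gradient_const_mul_lpnorm_rpow (hpq : p.HolderConjugate q) (ht : 1 < t) (c : ℝ)
    (u : EuclideanSpace ℝ (Fin d)) :
    lpnorm q (gradient (fun v : EuclideanSpace ℝ (Fin d) => c * lpnorm p v ^ t) u) =
      |c| * (t * lpnorm p u ^ (t - 1)) := by
  have hgrad := hasGradientAt_comp_of_hasDerivAt (hasDerivAt_const_mul c)
    (hasGradientAt_lpnorm_rpow hpq.lt ht u)
  have hexp : lpnorm p u ^ (t - p) * lpnorm p u ^ (p - 1) = lpnorm p u ^ (t - 1) := by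
    rcases eq_or_ne u 0 with rfl | hu
    · rw [lpnorm_zero hpq.ne_zero, Real.zero_rpow hpq.sub_one_ne_zero,
        Real.zero_rpow (sub_ne_zero.2 ht.ne'), mul_zero]
    · rw [← Real.rpow_add (lpnorm_pos p hu), sub_add_sub_cancel]
  have hcoeff : 0 ≤ t * lpnorm p u ^ (t - p) :=
    mul_nonneg (by linarith) (Real.rpow_nonneg (lpnorm_nonneg p u) _)
  rw [hgrad.gradient, lpnorm_smul hpq.symm.ne_zero, lpnorm_smul hpq.symm.ne_zero,
    lpnorm_lpDualityMap hpq, abs_of_nonneg hcoeff, mul_assoc t, hexp]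

end LpNorm

theorem regularized_step_operator_norm_bound_general {d : ℕ} (p : ℝ) (hp : 1 < p)
    (s : ℕ) (hs : 1 ≤ s) (L ν : ℝ) (hL : 0 ≤ L)
    (F : EuclideanSpace ℝ (Fin d) → EuclideanSpace ℝ (Fin d))
    (a b g : EuclideanSpace ℝ (Fin d))
    (hi : lpnorm (p / (p - 1)) (g - F a) ≤
      (L / (s.factorial : ℝ)) * lpnorm p (a - b) ^ (s : ℝ))
    (hii : g + gradient
        (fun u : EuclideanSpace ℝ (Fin d) =>
          (2 ^ ν * L / (s.factorial : ℝ)) * lpnorm p u ^ ((s : ℝ) + 1)) (a - b) = 0) :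
    lpnorm (p / (p - 1)) g =
        2 ^ ν * (((s : ℝ) + 1) * L / (s.factorial : ℝ)) * lpnorm p (a - b) ^ (s : ℝ) ∧
      lpnorm (p / (p - 1)) (F a) ≤
        ((((s : ℝ) + 1) * 2 ^ ν + 1) * L / (s.factorial : ℝ)) *
          lpnorm p (a - b) ^ (s : ℝ) := by
  have hpq : p.HolderConjugate (p / (p - 1)) := .conjExponent hp
  have ht : 1 < (s : ℝ) + 1 := by
    have : (1 : ℝ) ≤ s := mod_cast hs
    linarith
  have hg : lpnorm (p / (p - 1)) g =
      2 ^ ν * (((s : ℝ) + 1) * L / (s.factorial : ℝ)) * lpnorm p (a - b) ^ (s : ℝ) := by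
    rw [eq_neg_of_add_eq_zero_left hii, lpnorm_neg, lpnorm_gradient_const_mul_lpnorm_rpow hpq ht,
      abs_of_nonneg (by positivity), add_sub_cancel_right]
    ring
  refine ⟨hg, ?_⟩
  calc lpnorm (p / (p - 1)) (F a) = lpnorm (p / (p - 1)) (g - (g - F a)) := by
        rw [sub_sub_cancel]
    _ ≤ lpnorm (p / (p - 1)) g + lpnorm (p / (p - 1)) (g - F a) :=
        lpnorm_sub_le hpq.symm.lt.le _ _
    _ ≤ 2 ^ ν * (((s : ℝ) + 1) * L / (s.factorial : ℝ)) * lpnorm p (a - b) ^ (s : ℝ) +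
          L / (s.factorial : ℝ) * lpnorm p (a - b) ^ (s : ℝ) := add_le_add hg.le hi
    _ = ((((s : ℝ) + 1) * 2 ^ ν + 1) * L / (s.factorial : ℝ)) *
          lpnorm p (a - b) ^ (s : ℝ) := by ring

/-- If `g` approximates `F(a)` to order `s` in the dual norm and satisfies the
first-order optimality condition of the regularized step
`g + ∇_u((2^ν L/s!)·‖u‖_p^{s+1})|_{u=a−b} = 0`, then
`‖g‖_{p*} = 2^ν·((s+1)L/s!)·‖a − b‖_p^s` and
`‖F(a)‖_{p*} ≤ (((s+1)·2^ν + 1)·L/s!)·‖a − b‖_p^s`. -/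
theorem regularized_step_operator_norm_bound {d : ℕ} (p : ℝ) (hp : 2 ≤ p)
    (s : ℕ) (hs : 1 ≤ s) (hsp : p ≤ (s : ℝ) + 1) (L ν : ℝ) (hL : 0 < L)
    (F : EuclideanSpace ℝ (Fin d) → EuclideanSpace ℝ (Fin d))
    (a b g : EuclideanSpace ℝ (Fin d))
    (hi : lpnorm (p / (p - 1)) (g - F a) ≤
      (L / (s.factorial : ℝ)) * lpnorm p (a - b) ^ (s : ℝ))
    (hii : g + gradient
        (fun u : EuclideanSpace ℝ (Fin d) =>
          (2 ^ ν * L / (s.factorial : ℝ)) * lpnorm p u ^ ((s : ℝ) + 1)) (a - b) = 0) :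
    lpnorm (p / (p - 1)) g =
        2 ^ ν * (((s : ℝ) + 1) * L / (s.factorial : ℝ)) * lpnorm p (a - b) ^ (s : ℝ) ∧
      lpnorm (p / (p - 1)) (F a) ≤
        ((((s : ℝ) + 1) * 2 ^ ν + 1) * L / (s.factorial : ℝ)) *
          lpnorm p (a - b) ^ (s : ℝ) := by
  exact regularized_step_operator_norm_bound_general p (by linarith) s hs L ν hL.le F a b g hi hii
end
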